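/- arXiv:1906.01329 — 15 statements merged into one kernel-verified Lean document; each statement's English description precedes it below -/
import Mathlib

section
/- Suppose there is no nonzero element u of D such that N(c) = N(u)^2 (i.e., N(c) is not the square of a norm of a nonzero element). Then the multiplication of Cay(D,c,σ₁,σ₂,σ₃,σ₄) has no zero divisors: for all u, v, x, y ∈ D, if u·x + c·σ₁(v)·σ₂(y) = 0 and σ₃(u)·y + v·σ₄(x) = 0, then (u = 0 and v = 0) or (x = 0 and y = 0). In particular Cay(D,c,σ₁,σ₂,σ₃,σ₄) is a division algebra. -/
/-- Multiplication of the generalized Cayley–Dickson double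
`Cay(D, c, σ₁, σ₂, σ₃, σ₄)`:
`(u,v)·(x,y) = (u·x + c·σ₁(v)·σ₂(y), σ₃(u)·y + v·σ₄(x))`. -/
def cayMul {R : Type*} [Ring R] (c : R) (σ₁ σ₂ σ₃ σ₄ : R → R) :
    R × R → R × R → R × R :=
  fun p q => (p.1 * q.1 + c * σ₁ p.2 * σ₂ q.2, σ₃ p.1 * q.2 + p.2 * σ₄ q.1)

/-- If `N(c)` is not the square of the norm of a nonzero element of the
central division algebra `D`, then `Cay(D,c,σ₁,σ₂,σ₃,σ₄)` has no zero divisors,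
hence is a division algebra. -/
theorem cay_central_division_algebra_no_zero_divisors
    {F D : Type*} [Field F] [DivisionRing D] [Algebra F D]
    [FiniteDimensional F D] [Algebra.IsCentral F D]
    (σ₁ σ₂ σ₃ σ₄ : D ≃ₐ[F] D) (c : D) (hc : c ≠ 0)
    (N : D → F)
    (hNmul : ∀ x y : D, N (x * y) = N x * N y)
    (hNdeg : ∀ x : D, N x = 0 ↔ x = 0)
    (hNσ₁ : ∀ x : D, N (σ₁ x) = N x) (hNσ₂ : ∀ x : D, N (σ₂ x) = N x)
    (hNσ₃ : ∀ x : D, N (σ₃ x) = N x) (hNσ₄ : ∀ x : D, N (σ₄ x) = N x)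
    (hcN : ¬ ∃ u : D, u ≠ 0 ∧ N c = (N u) ^ 2) :
    ∀ u v x y : D,
      u * x + c * σ₁ v * σ₂ y = 0 → σ₃ u * y + v * σ₄ x = 0 →
        (u = 0 ∧ v = 0) ∨ (x = 0 ∧ y = 0) := by
  intro u v x y h1 h2
  by_cases hu : u = 0
  · by_cases hv : v = 0
    · exact Or.inl ⟨hu, hv⟩
    · right
      subst hu
      constructor
      · simpa [hv] using h2
      · simpa [hv, hc] using h1
  by_cases hv : v = 0
  · right
    subst hv
    constructor
    · simpa [hu] using h1
    · simpa [hu] using h2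
  by_cases hy : y = 0
  · right
    subst hy
    refine ⟨?_, rfl⟩
    simpa [hu] using h1
  exfalso
  have hv' : N v ≠ 0 := fun h => hv ((hNdeg v).1 h)
  have hy' : N y ≠ 0 := fun h => hy ((hNdeg y).1 h)
  have e1 : u * x = (-1) * (c * σ₁ v * σ₂ y) := by
    rw [neg_one_mul]; exact eq_neg_of_add_eq_zero_left h1
  have e2 : σ₃ u * y = (-1) * (v * σ₄ x) := by
    rw [neg_one_mul]; exact eq_neg_of_add_eq_zero_left h2
  have n1 := congrArg N e1
  have n2 := congrArg N e2
  simp only [hNmul, hNσ₁, hNσ₂, hNσ₃, hNσ₄] at n1 n2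
  have hN1 : N 1 = 1 := by
    have h := hNmul 1 1
    rw [mul_one] at h
    have h0 : N 1 ≠ 0 := fun h => one_ne_zero ((hNdeg 1).1 h)
    exact mul_left_cancel₀ h0 (by rw [← h, mul_one])
  have hm : N (-1) * N (-1) = 1 := by
    rw [← hNmul, neg_mul_neg, one_mul, hN1]
  have key : N c * N v ^ 2 = N u ^ 2 := by
    apply mul_right_cancel₀ hy'
    linear_combination (-N c * N v ^ 2 * N y) * hm - N (-1) * N v * n1 - N u * n2
  have hw : N (u * v⁻¹) * N v = N u := by
    rw [← hNmul, inv_mul_cancel_right₀ hv]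
  refine hcN ⟨u * v⁻¹, mul_ne_zero hu (inv_ne_zero hv), ?_⟩
  apply mul_right_cancel₀ (pow_ne_zero 2 hv')
  rw [key, ← mul_pow, hw]
end

section
/- Suppose there is no nonzero element a of K such that N_{K/F}(c) = N_{K/F}(a)^2 (i.e., N_{K/F}(c) is not the square of a norm of a nonzero element of K). Then the multiplication of Cay(K,c,σ₁,σ₂,σ₃,σ₄) has no zero divisors: for all u, v, x, y ∈ K, if u·x + c·σ₁(v)·σ₂(y) = 0 and σ₃(u)·y + v·σ₄(x) = 0, then (u = 0 and v = 0) or (x = 0 and y = 0). In particular Cay(K,c,σ₁,σ₂,σ₃,σ₄) is a division algebra. -/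
/-- If `N_{K/F}(c)` is not the square of the norm of a nonzero element of the
finite separable field extension `K/F`, then `Cay(K,c,σ₁,σ₂,σ₃,σ₄)` has no zero divisors,
hence is a division algebra. -/
theorem cay_separable_field_no_zero_divisors
    {F K : Type*} [Field F] [Field K] [Algebra F K]
    [FiniteDimensional F K] [Algebra.IsSeparable F K]
    (σ₁ σ₂ σ₃ σ₄ : K ≃ₐ[F] K) (c : K) (hc : c ≠ 0)
    (hcN : ¬ ∃ a : K, a ≠ 0 ∧ Algebra.norm F c = (Algebra.norm F a) ^ 2) :
    ∀ u v x y : K,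
      u * x + c * σ₁ v * σ₂ y = 0 → σ₃ u * y + v * σ₄ x = 0 →
        (u = 0 ∧ v = 0) ∨ (x = 0 ∧ y = 0) := by
  intro u v x y h1 h2
  by_cases hu : u = 0
  · subst hu
    simp [hc] at h1 h2
    tauto
  by_cases hv : v = 0
  · subst hv
    simp [hu] at h1 h2
    tauto
  by_cases hx : x = 0
  · subst hx
    simp [hu] at h2
    tauto
  by_cases hy : y = 0
  · subst hy
    simp [hv] at h2
    tauto
  exfalso
  apply hcN
  refine ⟨x / y, div_ne_zero hx hy, ?_⟩
  have e1 : u * x = (-1) * (c * σ₁ v * σ₂ y) := by linear_combination h1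
  have e2 : σ₃ u * y = (-1) * (v * σ₄ x) := by linear_combination h2
  have e3 : Algebra.norm F (-1 : K) * Algebra.norm F (-1 : K) = 1 := by
    rw [← map_mul]; simp
  have n1 := congrArg (Algebra.norm F) e1
  have n2 := congrArg (Algebra.norm F) e2
  simp only [map_mul, Algebra.norm_eq_of_algEquiv] at n1 n2
  have hv' : Algebra.norm F v ≠ 0 := Algebra.norm_ne_zero_iff.mpr hv
  have hy' : Algebra.norm F y ≠ 0 := Algebra.norm_ne_zero_iff.mpr hy
  have hq : Algebra.norm F (x / y) * Algebra.norm F y = Algebra.norm F x := by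
    rw [← map_mul, div_mul_cancel₀ _ hy]
  generalize Algebra.norm F (-1 : K) = e at *
  generalize Algebra.norm F (x / y) = q at *
  rw [← hq] at n1 n2
  have n3 : Algebra.norm F u = e * (Algebra.norm F v * q) :=
    mul_right_cancel₀ hy' (by linear_combination n2)
  rw [n3] at n1
  apply mul_right_cancel₀ (mul_ne_zero hv' hy')
  linear_combination (-e) * n1 + (q ^ 2 - Algebra.norm F c) * Algebra.norm F v * Algebra.norm F y * e3
end

section
/- If σ₁ ≠ σ₂ or σ₃ ≠ σ₄, then an element (u,v) of Cay(K,c,σ₁,σ₂,σ₃,σ₄) commutes with every element of the algebra if and only if v = 0 and σ₃(u) = σ₄(u); that is, the commutator of the algebra equals {(u,0) : u ∈ K, σ₃(u) = σ₄(u)}. -/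
/-- If `σ₁ ≠ σ₂` or `σ₃ ≠ σ₄`, then an element `(u,v)` of
`Cay(K,c,σ₁,σ₂,σ₃,σ₄)` commutes with every element iff `v = 0` and `σ₃(u) = σ₄(u)`;
i.e. the commutator is `{(u,0) : σ₃(u) = σ₄(u)}`. -/
theorem cay_field_commutator
    {F K : Type*} [Field F] [Field K] [Algebra F K] [FiniteDimensional F K]
    (σ₁ σ₂ σ₃ σ₄ : K ≃ₐ[F] K) (c : K) (hc : c ≠ 0)
    (h : σ₁ ≠ σ₂ ∨ σ₃ ≠ σ₄) (u v : K) :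
    (∀ x y : K,
        (u * x + c * σ₁ v * σ₂ y, σ₃ u * y + v * σ₄ x)
          = (x * u + c * σ₁ y * σ₂ v, σ₃ x * v + y * σ₄ u)) ↔
      (v = 0 ∧ σ₃ u = σ₄ u) := by
  constructor
  · intro H
    have h01 := H 0 1
    simp only [Prod.mk.injEq, map_one, map_zero, mul_zero, zero_mul, mul_one, one_mul,
      zero_add, add_zero] at h01
    obtain ⟨h1, h2⟩ := h01
    have h1' : σ₁ v = σ₂ v := by
      simpa [hc] using h1
    refine ⟨?_, h2⟩
    by_contra hv
    have hv2 : σ₂ v ≠ 0 := by simpa using hv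
    rcases h with h | h
    · apply h
      ext y
      have hy := (Prod.mk.inj (H 0 y)).1
      rw [h1'] at hy
      have : (c * σ₂ v) * σ₁ y = (c * σ₂ v) * σ₂ y := by linear_combination -hy
      exact mul_left_cancel₀ (mul_ne_zero hc hv2) this
    · apply h
      ext x
      have hx := (Prod.mk.inj (H x 0)).2
      have : v * σ₃ x = v * σ₄ x := by linear_combination -hx
      exact mul_left_cancel₀ hv this
  · rintro ⟨rfl, hu⟩ x y
    simp [hu, mul_comm]
end

section
/- Suppose at least one of the following holds: σ₂ ∘ σ₄ ≠ id, or σ₁ ∘ σ₄ ≠ σ₂ ∘ σ₃, or σ₄ ∘ σ₁ ≠ σ₃ ∘ σ₂. Then an element (k,m) of Cay(K,c,σ₁,σ₂,σ₃,σ₄) lies in the left nucleus (i.e., ((k,m)·z)·w = (k,m)·(z·w) for all z, w in the algebra) if and only if m = 0 and σ₁(σ₃(k)) = k; that is, the left nucleus equals Fix(σ₁ ∘ σ₃) × {0}. -/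
/-- If `σ₂∘σ₄ ≠ id`, or `σ₁∘σ₄ ≠ σ₂∘σ₃`, or `σ₄∘σ₁ ≠ σ₃∘σ₂`, then the
left nucleus of `Cay(K,c,σ₁,σ₂,σ₃,σ₄)` is `Fix(σ₁∘σ₃) × {0}`. -/
theorem cay_field_left_nucleus
    {F K : Type*} [Field F] [Field K] [Algebra F K] [FiniteDimensional F K]
    (σ₁ σ₂ σ₃ σ₄ : K ≃ₐ[F] K) (c : K) (hc : c ≠ 0)
    (h : (⇑σ₂ ∘ ⇑σ₄ ≠ id) ∨ (⇑σ₁ ∘ ⇑σ₄ ≠ ⇑σ₂ ∘ ⇑σ₃) ∨ (⇑σ₄ ∘ ⇑σ₁ ≠ ⇑σ₃ ∘ ⇑σ₂))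
    (k m : K) :
    (∀ z w : K × K,
        cayMul c σ₁ σ₂ σ₃ σ₄ (cayMul c σ₁ σ₂ σ₃ σ₄ (k, m) z) w
          = cayMul c σ₁ σ₂ σ₃ σ₄ (k, m) (cayMul c σ₁ σ₂ σ₃ σ₄ z w)) ↔
      (m = 0 ∧ σ₁ (σ₃ k) = k) := by
  constructor
  · intro H
    have hm : m = 0 := by
      by_contra hm
      have hm1 : σ₁ m ≠ 0 := by simpa using hm
      have hc4 : σ₄ c ≠ 0 := by simpa using hc
      rcases h with h | h | h
      · apply h
        funext s
        have := congrArg Prod.fst (H (0, 1) (s, 0))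
        simp only [cayMul, map_zero, map_one, map_add, map_mul, mul_zero, zero_mul, mul_one,
          one_mul, add_zero, zero_add] at this
        apply mul_left_cancel₀ (mul_ne_zero hc hm1)
        simp only [Function.comp_apply, id]
        linear_combination -this
      · apply h
        funext x
        have := congrArg Prod.fst (H (x, 0) (0, 1))
        simp only [cayMul, map_zero, map_one, map_add, map_mul, mul_zero, zero_mul, mul_one,
          one_mul, add_zero, zero_add] at this
        apply mul_left_cancel₀ (mul_ne_zero hc hm1)
        simp only [Function.comp_apply, id]
        linear_combination this
      · apply h
        funext y
        have e1 := congrArg Prod.snd (H (0, 1) (0, 1))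
        have e2 := congrArg Prod.snd (H (0, y) (0, 1))
        simp [cayMul] at e1 e2
        rw [e1] at e2
        have h0 : m * σ₄ c ≠ 0 := mul_ne_zero hm hc4
        apply mul_left_cancel₀ h0
        simp only [Function.comp_apply]
        linear_combination -e2
    refine ⟨hm, ?_⟩
    have := congrArg Prod.fst (H (0, 1) (0, 1))
    simp [cayMul, hm] at this
    apply mul_left_cancel₀ hc
    linear_combination this
  · rintro ⟨rfl, hk⟩ ⟨x, y⟩ ⟨s, t⟩
    simp only [cayMul, map_zero, map_add, map_mul, hk]
    ext <;> simp <;> ring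
end

section
/- Suppose at least one of the following holds: σ₂ ∘ σ₄ ≠ id, or σ₁ ∘ σ₄ ≠ σ₂ ∘ σ₃, or σ₄ ∘ σ₁ ≠ σ₃ ∘ σ₂. Then an element (k,m) of Cay(D,c,σ₁,σ₂,σ₃,σ₄) lies in the left nucleus (i.e., ((k,m)·z)·w = (k,m)·(z·w) for all z, w in the algebra) if and only if m = 0 and c·σ₁(σ₃(k)) = k·c; that is, the left nucleus equals {k ∈ D : σ₁(σ₃(k)) = c⁻¹·k·c} × {0}. -/
/-- If `σ₂∘σ₄ ≠ id`, or `σ₁∘σ₄ ≠ σ₂∘σ₃`, or `σ₄∘σ₁ ≠ σ₃∘σ₂`, then the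
left nucleus of `Cay(D,c,σ₁,σ₂,σ₃,σ₄)` is `{k ∈ D : σ₁(σ₃(k)) = c⁻¹·k·c} × {0}`,
i.e. `(k,m)` lies in the left nucleus iff `m = 0` and `c·σ₁(σ₃(k)) = k·c`. -/
theorem cay_central_division_algebra_left_nucleus
    {F D : Type*} [Field F] [DivisionRing D] [Algebra F D]
    [FiniteDimensional F D] [Algebra.IsCentral F D]
    (σ₁ σ₂ σ₃ σ₄ : D ≃ₐ[F] D) (c : D) (hc : c ≠ 0)
    (h : (⇑σ₂ ∘ ⇑σ₄ ≠ id) ∨ (⇑σ₁ ∘ ⇑σ₄ ≠ ⇑σ₂ ∘ ⇑σ₃) ∨ (⇑σ₄ ∘ ⇑σ₁ ≠ ⇑σ₃ ∘ ⇑σ₂))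
    (k m : D) :
    (∀ z w : D × D,
        cayMul c σ₁ σ₂ σ₃ σ₄ (cayMul c σ₁ σ₂ σ₃ σ₄ (k, m) z) w
          = cayMul c σ₁ σ₂ σ₃ σ₄ (k, m) (cayMul c σ₁ σ₂ σ₃ σ₄ z w)) ↔
      (m = 0 ∧ c * σ₁ (σ₃ k) = k * c) := by
  constructor
  · intro H
    have hB : c * σ₁ (σ₃ k) = k * c := by
      have := congrArg Prod.fst (H (0, 1) (0, 1))
      simpa [cayMul] using this
    refine ⟨?_, hB⟩
    by_contra hm
    have hm1 : σ₁ m ≠ 0 := by simpa using hm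
    have hg : m * σ₄ c ≠ 0 := mul_ne_zero hm (by simpa using hc)
    have hD1 : σ₃ c * σ₃ (σ₁ m) = m * σ₄ c := by
      have := congrArg Prod.snd (H (0, 1) (0, 1))
      simpa [cayMul] using this
    rcases h with h | h | h
    · apply h
      funext p
      have := congrArg Prod.fst (H (0, 1) (p, 0))
      simp [cayMul, hc, hm] at this
      simpa using this.symm
    · apply h
      funext x
      have := congrArg Prod.fst (H (x, 0) (0, 1))
      simp [cayMul] at this
      simpa [mul_assoc, hc, hm1, hm] using this
    · apply h
      funext y
      have := congrArg Prod.snd (H (0, y) (0, 1))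
      simp [cayMul] at this
      rw [hD1, ← mul_assoc m] at this
      exact (mul_left_cancel₀ hg this).symm
  · rintro ⟨rfl, hB⟩ ⟨x, y⟩ ⟨p, q⟩
    have : c * (σ₁ (σ₃ k) * (σ₁ y * σ₂ q)) = k * (c * (σ₁ y * σ₂ q)) := by
      rw [← mul_assoc, hB, mul_assoc]
    simp [cayMul, mul_add, mul_assoc, this]
end

section
/- Let g, h : K → L be F-algebra isomorphisms, let b ∈ L with b ≠ 0, and suppose φᵢ = g ∘ σᵢ ∘ h⁻¹ for i = 1,2 and φᵢ = h ∘ σᵢ ∘ g⁻¹ for i = 3,4. Set c' = g(c)·φ₁(b)·φ₂(b). Then the map G : K × K → L × L defined by G(u,v) = (g(u), h(v)·b⁻¹) is an F-algebra isomorphism from Cay(K,c,σ₁,σ₂,σ₃,σ₄) to Cay(L,c',φ₁,φ₂,φ₃,φ₄); in particular G is bijective, F-linear, and multiplicative: G((u,v)·(x,y)) = G(u,v)·G(x,y) for all u, v, x, y ∈ K, where the first product uses the multiplication of Cay(K,c,σ₁,σ₂,σ₃,σ₄) and the second that of Cay(L,c',φ₁,φ₂,φ₃,φ₄). -/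
/-- Given `F`-isomorphisms `g,h : K → L`, `b ∈ L⁎`, and
`φᵢ = g∘σᵢ∘h⁻¹` (i = 1,2), `φᵢ = h∘σᵢ∘g⁻¹` (i = 3,4), the map
`G(u,v) = (g(u), h(v)·b⁻¹)` is an `F`-algebra isomorphism from
`Cay(K,c,σ₁,σ₂,σ₃,σ₄)` to `Cay(L, g(c)·φ₁(b)·φ₂(b), φ₁,φ₂,φ₃,φ₄)`. -/
theorem cay_field_isomorphism_construction
    {F K L : Type*} [Field F] [Field K] [Field L] [Algebra F K] [Algebra F L]
    [FiniteDimensional F K] [FiniteDimensional F L]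
    (σ₁ σ₂ σ₃ σ₄ : K ≃ₐ[F] K) (c : K) (hc : c ≠ 0)
    (φ₁ φ₂ φ₃ φ₄ : L ≃ₐ[F] L)
    (g h : K ≃ₐ[F] L) (b : L) (hb : b ≠ 0)
    (hφ₁ : ∀ x : L, φ₁ x = g (σ₁ (h.symm x)))
    (hφ₂ : ∀ x : L, φ₂ x = g (σ₂ (h.symm x)))
    (hφ₃ : ∀ x : L, φ₃ x = h (σ₃ (g.symm x)))
    (hφ₄ : ∀ x : L, φ₄ x = h (σ₄ (g.symm x)))
    (c' : L) (hc' : c' = g c * φ₁ b * φ₂ b)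
    (G : K × K → L × L) (hG : ∀ u v : K, G (u, v) = (g u, h v * b⁻¹)) :
    Function.Bijective G ∧
    (∀ p q : K × K, G (p + q) = G p + G q) ∧
    (∀ (α : F) (p : K × K), G (α • p) = α • G p) ∧
    (∀ p q : K × K, G (cayMul c σ₁ σ₂ σ₃ σ₄ p q) = cayMul c' φ₁ φ₂ φ₃ φ₄ (G p) (G q)) := by
  refine ⟨⟨?_, ?_⟩, ?_, ?_, ?_⟩
  · rintro ⟨u, v⟩ ⟨x, y⟩ hxy
    rw [hG, hG, Prod.mk.injEq] at hxy
    obtain ⟨h1, h2⟩ := hxy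
    have h3 := mul_right_cancel₀ (inv_ne_zero hb) h2
    rw [g.injective h1, h.injective h3]
  · rintro ⟨x, y⟩
    refine ⟨(g.symm x, h.symm (y * b)), ?_⟩
    rw [hG, AlgEquiv.apply_symm_apply, AlgEquiv.apply_symm_apply, mul_inv_cancel_right₀ hb]
  · rintro ⟨u, v⟩ ⟨x, y⟩
    rw [Prod.mk_add_mk, hG, hG, hG, Prod.mk_add_mk, map_add, map_add, add_mul]
  · rintro α ⟨u, v⟩
    rw [Prod.smul_mk, hG, hG, Prod.smul_mk, map_smul, map_smul, smul_mul_assoc]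
  · rintro ⟨u, v⟩ ⟨x, y⟩
    have e1 : ∀ z, φ₁ (h z) = g (σ₁ z) := fun z => by rw [hφ₁, AlgEquiv.symm_apply_apply]
    have e2 : ∀ z, φ₂ (h z) = g (σ₂ z) := fun z => by rw [hφ₂, AlgEquiv.symm_apply_apply]
    have e3 : ∀ z, φ₃ (g z) = h (σ₃ z) := fun z => by rw [hφ₃, AlgEquiv.symm_apply_apply]
    have e4 : ∀ z, φ₄ (g z) = h (σ₄ z) := fun z => by rw [hφ₄, AlgEquiv.symm_apply_apply]
    have b1 : φ₁ b ≠ 0 := (map_ne_zero φ₁).2 hb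
    have b2 : φ₂ b ≠ 0 := (map_ne_zero φ₂).2 hb
    simp only [cayMul, hG, hc', map_add, map_mul, map_inv₀, e1, e2, e3, e4]
    refine Prod.ext ?_ ?_
    · field_simp
    · simp only
      ring
end

section
/- Let g, h : D → D' be F-algebra isomorphisms, let b ∈ F with b ≠ 0, and suppose φᵢ = g ∘ σᵢ ∘ h⁻¹ for i = 1,2 and φᵢ = h ∘ σᵢ ∘ g⁻¹ for i = 3,4. Set c' = g(c)·b². Then the map G : D × D → D' × D' defined by G(u,v) = (g(u), h(v)·b⁻¹) is an F-algebra isomorphism from Cay(D,c,σ₁,σ₂,σ₃,σ₄) to Cay(D',c',φ₁,φ₂,φ₃,φ₄); in particular G is bijective, F-linear, and multiplicative: G((u,v)·(x,y)) = G(u,v)·G(x,y) for all u, v, x, y ∈ D, where the first product uses the multiplication of Cay(D,c,σ₁,σ₂,σ₃,σ₄) and the second that of Cay(D',c',φ₁,φ₂,φ₃,φ₄). -/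
/-- Given `F`-isomorphisms `g,h : D → D'` of central simple `F`-algebras,
`b ∈ F⁎`, and `φᵢ = g∘σᵢ∘h⁻¹` (i = 1,2), `φᵢ = h∘σᵢ∘g⁻¹` (i = 3,4), the map
`G(u,v) = (g(u), h(v)·b⁻¹)` is an `F`-algebra isomorphism from
`Cay(D,c,σ₁,σ₂,σ₃,σ₄)` to `Cay(D', g(c)·b², φ₁,φ₂,φ₃,φ₄)`. -/
theorem cay_csa_isomorphism_construction
    {F D D' : Type*} [Field F] [Ring D] [Ring D'] [Algebra F D] [Algebra F D']
    [FiniteDimensional F D] [FiniteDimensional F D']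
    [Algebra.IsCentral F D] [IsSimpleRing D] [Algebra.IsCentral F D'] [IsSimpleRing D']
    (σ₁ σ₂ σ₃ σ₄ : D ≃ₐ[F] D) (c : D) (hc : c ≠ 0)
    (φ₁ φ₂ φ₃ φ₄ : D' ≃ₐ[F] D')
    (g h : D ≃ₐ[F] D') (b : F) (hb : b ≠ 0)
    (hφ₁ : ∀ x : D', φ₁ x = g (σ₁ (h.symm x)))
    (hφ₂ : ∀ x : D', φ₂ x = g (σ₂ (h.symm x)))
    (hφ₃ : ∀ x : D', φ₃ x = h (σ₃ (g.symm x)))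
    (hφ₄ : ∀ x : D', φ₄ x = h (σ₄ (g.symm x)))
    (c' : D') (hc' : c' = g c * algebraMap F D' (b ^ 2))
    (G : D × D → D' × D') (hG : ∀ u v : D, G (u, v) = (g u, h v * algebraMap F D' b⁻¹)) :
    Function.Bijective G ∧
    (∀ p q : D × D, G (p + q) = G p + G q) ∧
    (∀ (α : F) (p : D × D), G (α • p) = α • G p) ∧
    (∀ p q : D × D, G (cayMul c σ₁ σ₂ σ₃ σ₄ p q) = cayMul c' φ₁ φ₂ φ₃ φ₄ (G p) (G q)) := by
  have hG' : ∀ u v : D, G (u, v) = (g u, b⁻¹ • h v) := by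
    intro u v
    rw [hG, ← Algebra.commutes, ← Algebra.smul_def]
  have hc2 : c' = (b ^ 2) • g c := by
    rw [hc', ← Algebra.commutes, ← Algebra.smul_def]
  refine ⟨⟨?_, ?_⟩, ?_, ?_, ?_⟩
  · rintro ⟨u, v⟩ ⟨x, y⟩ e
    rw [hG', hG', Prod.mk.injEq] at e
    obtain ⟨e1, e2⟩ := e
    rw [g.injective e1, h.injective (smul_right_injective D' (inv_ne_zero hb) e2)]
  · rintro ⟨x, y⟩
    refine ⟨(g.symm x, b • h.symm y), ?_⟩
    rw [hG']
    simp [smul_smul, hb]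
  · rintro ⟨u, v⟩ ⟨x, y⟩
    simp [hG']
  · rintro α ⟨u, v⟩
    simp [hG', smul_smul, mul_comm]
  · rintro ⟨u, v⟩ ⟨x, y⟩
    have hs : b ^ 2 * (b⁻¹ * b⁻¹) = 1 := by field_simp
    have hs2 : b⁻¹ * (b⁻¹ * b ^ 2) = 1 := by field_simp
    simp only [cayMul, hG', hφ₁, hφ₂, hφ₃, hφ₄, hc2, map_add, map_mul, map_smul,
      AlgEquiv.symm_apply_apply, smul_mul_assoc, mul_smul_comm, smul_smul, smul_add, hs, hs2,
      one_smul]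
end

section
/- The map G : D × D → D × D defined by G(u,v) = (u, σ₄⁻¹(v)) is an F-algebra isomorphism from Cay(D,c,σ₁,σ₂,σ₃,σ₄) to Cay(D,c,σ₁∘σ₄, σ₂∘σ₄, σ₄⁻¹∘σ₃, id); in particular G is bijective, F-linear, and satisfies G((u,v)·(x,y)) = G(u,v)·G(x,y) for all u, v, x, y ∈ D, where the first product uses the multiplication of Cay(D,c,σ₁,σ₂,σ₃,σ₄) and the second that of Cay(D,c,σ₁∘σ₄, σ₂∘σ₄, σ₄⁻¹∘σ₃, id). Hence every such algebra is isomorphic to one with fourth automorphism equal to the identity. -/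
/-- `G(u,v) = (u, σ₄⁻¹(v))` is an `F`-algebra isomorphism from
`Cay(D,c,σ₁,σ₂,σ₃,σ₄)` to `Cay(D,c,σ₁∘σ₄,σ₂∘σ₄,σ₄⁻¹∘σ₃,id)`; hence every such
algebra is isomorphic to one whose fourth automorphism is the identity. -/
theorem cay_isomorphic_to_fourth_id
    {F D : Type*} [Field F] [DivisionRing D] [Algebra F D]
    [FiniteDimensional F D] [Algebra.IsCentral F D]
    (σ₁ σ₂ σ₃ σ₄ : D ≃ₐ[F] D) (c : D) (hc : c ≠ 0)
    (G : D × D → D × D) (hG : ∀ u v : D, G (u, v) = (u, σ₄.symm v)) :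
    Function.Bijective G ∧
    (∀ p q : D × D, G (p + q) = G p + G q) ∧
    (∀ (α : F) (p : D × D), G (α • p) = α • G p) ∧
    (∀ p q : D × D,
      G (cayMul c σ₁ σ₂ σ₃ σ₄ p q)
        = cayMul c (⇑σ₁ ∘ ⇑σ₄) (⇑σ₂ ∘ ⇑σ₄) (⇑σ₄.symm ∘ ⇑σ₃) id (G p) (G q)) := by
  refine ⟨⟨?_, ?_⟩, ?_, ?_, ?_⟩
  · rintro ⟨u, v⟩ ⟨x, y⟩ h
    rw [hG, hG, Prod.mk.injEq] at h
    exact Prod.ext h.1 (σ₄.symm.injective h.2)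
  · rintro ⟨u, v⟩
    exact ⟨(u, σ₄ v), by rw [hG, AlgEquiv.symm_apply_apply]⟩
  · rintro ⟨u, v⟩ ⟨x, y⟩
    simp only [Prod.mk_add_mk, hG, map_add]
  · rintro α ⟨u, v⟩
    simp only [Prod.smul_mk, hG, map_smul]
  · rintro ⟨u, v⟩ ⟨x, y⟩
    simp [cayMul, hG]
end

section
/- Assume the characteristic of F is not 2. Let G : K × K → L × L be an F-algebra isomorphism from Cay(K,c,σ₁,σ₂,σ₃,σ₄) to Cay(L,c',φ₁,φ₂,φ₃,φ₄) (i.e., G is bijective, F-linear, and G((u,v)·(x,y)) = G(u,v)·G(x,y) for all u,v,x,y ∈ K with the respective multiplications), and suppose G restricts to an isomorphism g : K → L of F-algebras, i.e., G(x,0) = (g(x),0) for all x ∈ K. Then there exist an F-algebra isomorphism h : K → L and b ∈ L with b ≠ 0 such that G(x,y) = (g(x), h(y)·b) for all x, y ∈ K, φᵢ ∘ h = g ∘ σᵢ for i = 1,2, φᵢ ∘ g = h ∘ σᵢ for i = 3,4, and g(c) = c'·φ₁(b)·φ₂(b). -/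
/-- If `char F ≠ 2` and `G : Cay(K,c,σ₁,σ₂,σ₃,σ₄) → Cay(L,c',φ₁,φ₂,φ₃,φ₄)`
is an `F`-algebra isomorphism restricting to an isomorphism `g : K → L`, then
`G(x,y) = (g(x), h(y)·b)` for some isomorphism `h : K → L` with `φᵢ∘h = g∘σᵢ`
(i = 1,2), `φᵢ∘g = h∘σᵢ` (i = 3,4), and some `b ≠ 0` with `g(c) = c'·φ₁(b)·φ₂(b)`. -/
theorem cay_field_isomorphism_restricting_form
    {F K L : Type*} [Field F] [Field K] [Field L] [Algebra F K] [Algebra F L]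
    [FiniteDimensional F K] [FiniteDimensional F L]
    (hF : (2 : F) ≠ 0)
    (σ₁ σ₂ σ₃ σ₄ : K ≃ₐ[F] K) (c : K) (hc : c ≠ 0)
    (φ₁ φ₂ φ₃ φ₄ : L ≃ₐ[F] L) (c' : L) (hc' : c' ≠ 0)
    (G : K × K → L × L)
    (hGbij : Function.Bijective G)
    (hGadd : ∀ p q : K × K, G (p + q) = G p + G q)
    (hGsmul : ∀ (α : F) (p : K × K), G (α • p) = α • G p)
    (hGmul : ∀ p q : K × K,
      G (cayMul c σ₁ σ₂ σ₃ σ₄ p q) = cayMul c' φ₁ φ₂ φ₃ φ₄ (G p) (G q))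
    (g : K ≃ₐ[F] L) (hGg : ∀ x : K, G (x, 0) = (g x, 0)) :
    ∃ (h : K ≃ₐ[F] L) (b : L), b ≠ 0 ∧
      (∀ x y : K, G (x, y) = (g x, h y * b)) ∧
      (∀ x : K, φ₁ (h x) = g (σ₁ x)) ∧
      (∀ x : K, φ₂ (h x) = g (σ₂ x)) ∧
      (∀ x : K, φ₃ (g x) = h (σ₃ x)) ∧
      (∀ x : K, φ₄ (g x) = h (σ₄ x)) ∧
      g c = c' * φ₁ b * φ₂ b := by
  have h2 : (2 : L) ≠ 0 := by
    intro h
    apply hF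
    apply (algebraMap F L).injective
    rw [map_ofNat, map_zero]
    exact h
  have hl : ∀ u y : K, G (0, σ₃ u * y) = (g u * (G (0, y)).1, φ₃ (g u) * (G (0, y)).2) := by
    intro u y
    have := hGmul (u, 0) (0, y)
    simpa [cayMul, hGg] using this
  have hr : ∀ v x : K, G (0, v * σ₄ x) = ((G (0, v)).1 * g x, (G (0, v)).2 * φ₄ (g x)) := by
    intro v x
    have := hGmul (0, v) (x, 0)
    simpa [cayMul, hGg] using this
  have hm : ∀ v y : K, (g (c * σ₁ v * σ₂ y), (0 : L)) =
      cayMul c' φ₁ φ₂ φ₃ φ₄ (G (0, v)) (G (0, y)) := by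
    intro v y
    have := hGmul (0, v) (0, y)
    rw [← this]
    simp [cayMul, hGg]
  obtain ⟨⟨a, b⟩, hab⟩ : ∃ z, G (0, 1) = z := ⟨_, rfl⟩
  have hl1 : ∀ u : K, G (0, σ₃ u) = (g u * a, φ₃ (g u) * b) := by
    intro u
    have := hl u 1
    simpa [hab] using this
  have hr1 : ∀ u : K, G (0, σ₄ u) = (a * g u, b * φ₄ (g u)) := by
    intro u
    have := hr 1 u
    simpa [hab] using this
  have hb : b ≠ 0 := by
    rintro rfl
    obtain ⟨⟨x, y⟩, hxy⟩ := hGbij.2 (0, 1)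
    have e : ((x, y) : K × K) = (x, 0) + (0, σ₃ (σ₃.symm y)) := by simp
    rw [e, hGadd, hGg, hl1] at hxy
    simp at hxy
  have h11 := hm 1 1
  rw [hab] at h11
  simp only [cayMul, Prod.mk.injEq] at h11
  have key : ∀ x, φ₃ (g (σ₃.symm x)) = φ₄ (g (σ₄.symm x)) := by
    intro x
    have e1 := hl1 (σ₃.symm x)
    have e2 := hr1 (σ₄.symm x)
    simp only [AlgEquiv.apply_symm_apply] at e1 e2
    rw [e1] at e2
    have e3 := (Prod.mk.inj e2).2
    rw [mul_comm] at e3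
    exact mul_left_cancel₀ hb e3
  have ha : a = 0 := by
    by_contra ha
    have e : ∀ x, σ₃.symm x = σ₄.symm x := by
      intro x
      have e1 := hl1 (σ₃.symm x)
      have e2 := hr1 (σ₄.symm x)
      simp only [AlgEquiv.apply_symm_apply] at e1 e2
      rw [e1] at e2
      have e3 := (Prod.mk.inj e2).1
      rw [mul_comm] at e3
      exact g.injective (mul_left_cancel₀ ha e3)
    have e4 : φ₃ a = φ₄ a := by
      have := key (σ₃ (g.symm a))
      rw [← e] at this
      simpa using this
    have e5 : 2 * (b * φ₄ a) = 0 := by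
      have := h11.2
      rw [e4] at this
      linear_combination -this
    have e6 : φ₄ a ≠ 0 := by simpa using ha
    exact mul_ne_zero h2 (mul_ne_zero hb e6) e5
  subst ha
  have hG0 : ∀ y, G (0, y) = (0, φ₃ (g (σ₃.symm y)) * b) := by
    intro y
    have := hl1 (σ₃.symm y)
    simpa using this
  have hgc : g c = c' * φ₁ b * φ₂ b := by simpa using h11.1
  have hgc0 : g c ≠ 0 := by simpa using hc
  refine ⟨(σ₃.symm.trans g).trans φ₃, b, hb, ?_, ?_, ?_, ?_, ?_, hgc⟩
  · intro x y
    have e : ((x, y) : K × K) = (x, 0) + (0, y) := by simp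
    rw [e, hGadd, hGg, hG0]
    simp
  · intro x
    have := (Prod.mk.inj (hm x 1)).1
    simp only [hG0, map_mul, map_one] at this
    apply mul_left_cancel₀ hgc0
    simp only [AlgEquiv.trans_apply]
    linear_combination -this + φ₁ (φ₃ (g (σ₃.symm x))) * hgc
  · intro x
    have := (Prod.mk.inj (hm 1 x)).1
    simp only [hG0, map_mul, map_one] at this
    apply mul_left_cancel₀ hgc0
    simp only [AlgEquiv.trans_apply]
    linear_combination -this + φ₂ (φ₃ (g (σ₃.symm x))) * hgc
  · intro x
    simp
  · intro x
    simp [key]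
end

section
/- Assume the characteristic of F is not 2 and that K is a finite separable extension of F with field norm N_{K/F} : K → F. Let c, c' ∈ K be nonzero, let σ₁,σ₂,σ₃,σ₄ and φ₁,φ₂,φ₃,φ₄ be F-algebra automorphisms of K, and suppose there exists an F-algebra isomorphism G from Cay(K,c,σ₁,σ₂,σ₃,σ₄) to Cay(K,c',φ₁,φ₂,φ₃,φ₄) (bijective, F-linear, multiplicative for the respective multiplications) that restricts to an F-algebra automorphism g of K, i.e., G(x,0) = (g(x),0) for all x ∈ K. Then there exists b ∈ K with b ≠ 0 such that N_{K/F}(c) = N_{K/F}(c')·N_{K/F}(b)², i.e., N_{K/F}(c·c'⁻¹) is the square of a norm from K. -/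
/-- If `char F ≠ 2`, `K/F` is finite separable, and there is an
`F`-algebra isomorphism `Cay(K,c,σ₁,σ₂,σ₃,σ₄) → Cay(K,c',φ₁,φ₂,φ₃,φ₄)` restricting
to an `F`-automorphism `g` of `K`, then `N_{K/F}(c) = N_{K/F}(c')·N_{K/F}(b)²` for
some `b ≠ 0`. -/
theorem cay_field_isomorphism_norm_condition
    {F K : Type*} [Field F] [Field K] [Algebra F K]
    [FiniteDimensional F K] [Algebra.IsSeparable F K]
    (hF : (2 : F) ≠ 0)
    (σ₁ σ₂ σ₃ σ₄ φ₁ φ₂ φ₃ φ₄ : K ≃ₐ[F] K) (c c' : K) (hc : c ≠ 0) (hc' : c' ≠ 0)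
    (G : K × K → K × K)
    (hGbij : Function.Bijective G)
    (hGadd : ∀ p q : K × K, G (p + q) = G p + G q)
    (hGsmul : ∀ (α : F) (p : K × K), G (α • p) = α • G p)
    (hGmul : ∀ p q : K × K,
      G (cayMul c σ₁ σ₂ σ₃ σ₄ p q) = cayMul c' φ₁ φ₂ φ₃ φ₄ (G p) (G q))
    (g : K ≃ₐ[F] K) (hGg : ∀ x : K, G (x, 0) = (g x, 0)) :
    ∃ b : K, b ≠ 0 ∧
      Algebra.norm F c = Algebra.norm F c' * (Algebra.norm F b) ^ 2 := by
  have hL : ∀ z : K, G (0, σ₃ z) = (g z * (G (0, 1)).1, φ₃ (g z) * (G (0, 1)).2) := by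
    intro z
    have h := hGmul (z, 0) (0, 1)
    rw [hGg] at h
    simpa [cayMul] using h
  have hR : ∀ z : K, G (0, σ₄ z) = ((G (0, 1)).1 * g z, (G (0, 1)).2 * φ₄ (g z)) := by
    intro z
    have h := hGmul (0, 1) (z, 0)
    rw [hGg] at h
    simpa [cayMul] using h
  have hS : (g c, (0 : K)) = cayMul c' φ₁ φ₂ φ₃ φ₄ (G (0, 1)) (G (0, 1)) := by
    have h := hGmul (0, 1) (0, 1)
    rw [← h, ← hGg]
    simp [cayMul]
  have hb : (G (0, 1)).2 ≠ 0 := by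
    intro hb
    have h : G (0, 1) = G (g.symm (G (0, 1)).1, 0) := by
      rw [hGg, AlgEquiv.apply_symm_apply]
      exact Prod.ext rfl hb
    have h2 := congrArg Prod.snd (hGbij.1 h)
    simp at h2
  generalize hab : G (0, 1) = p at *
  obtain ⟨a, b⟩ := p
  simp only [cayMul, Prod.mk.injEq] at hL hR hS hb
  have h2K : (2 : K) ≠ 0 := by
    intro h
    apply hF
    apply (algebraMap F K).injective
    rw [map_ofNat, map_zero, h]
  have ha : a = 0 := by
    by_contra ha
    have hσ : ∀ z, σ₃ z = σ₄ z := by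
      intro z
      have h1 := hL z
      have h2 := hR (σ₄.symm (σ₃ z))
      rw [AlgEquiv.apply_symm_apply, h1] at h2
      have h3 := congrArg Prod.fst h2
      simp only at h3
      rw [mul_comm] at h3
      have h4 := g.injective (mul_left_cancel₀ ha h3)
      conv_rhs => rw [h4]
      simp
    have h1 := hL (g.symm a)
    rw [hσ, hR] at h1
    have h3 := congrArg Prod.snd h1
    simp only [AlgEquiv.apply_symm_apply] at h3
    have h4 := hS.2
    rw [h3, ← two_mul] at h4
    have h5 : φ₃ a ≠ 0 := by simpa using ha
    exact mul_ne_zero h2K (mul_ne_zero h5 hb) h4.symm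
  have hN : ∀ (e : K ≃ₐ[F] K) (x : K), Algebra.norm F (e x) = Algebra.norm F x :=
    fun e x => Algebra.norm_eq_of_algEquiv e x
  refine ⟨b, hb, ?_⟩
  have h := congrArg (Algebra.norm F) hS.1
  rw [ha, zero_mul, zero_add, map_mul, map_mul, hN, hN, hN] at h
  rw [h]; ring
end

section
/- Let g, h be F-algebra automorphisms of K such that g ∘ σᵢ = σᵢ ∘ h for i = 1,2 and g ∘ σᵢ⁻¹ = σᵢ⁻¹ ∘ h for i = 3,4, and let b ∈ K with b ≠ 0 satisfy g(c) = σ₁(b)·σ₂(b)·c. Then the map G : K × K → K × K defined by G(u,v) = (g(u), h(v)·b) is an F-algebra automorphism of Cay(K,c,σ₁,σ₂,σ₃,σ₄); in particular G is bijective, F-linear, and G((u,v)·(x,y)) = G(u,v)·G(x,y) for all u, v, x, y ∈ K. -/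
/-- If `g, h ∈ Aut_F(K)` satisfy `g∘σᵢ = σᵢ∘h` (i = 1,2),
`g∘σᵢ⁻¹ = σᵢ⁻¹∘h` (i = 3,4), and `b ≠ 0` satisfies `g(c) = σ₁(b)·σ₂(b)·c`, then
`G(u,v) = (g(u), h(v)·b)` is an `F`-algebra automorphism of `Cay(K,c,σ₁,σ₂,σ₃,σ₄)`. -/
theorem cay_field_automorphism_construction
    {F K : Type*} [Field F] [Field K] [Algebra F K] [FiniteDimensional F K]
    (σ₁ σ₂ σ₃ σ₄ : K ≃ₐ[F] K) (c : K) (hc : c ≠ 0)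
    (g h : K ≃ₐ[F] K)
    (h1 : ∀ x : K, g (σ₁ x) = σ₁ (h x))
    (h2 : ∀ x : K, g (σ₂ x) = σ₂ (h x))
    (h3 : ∀ x : K, g (σ₃.symm x) = σ₃.symm (h x))
    (h4 : ∀ x : K, g (σ₄.symm x) = σ₄.symm (h x))
    (b : K) (hb : b ≠ 0) (hbc : g c = σ₁ b * σ₂ b * c)
    (G : K × K → K × K) (hG : ∀ u v : K, G (u, v) = (g u, h v * b)) :
    Function.Bijective G ∧
    (∀ p q : K × K, G (p + q) = G p + G q) ∧
    (∀ (α : F) (p : K × K), G (α • p) = α • G p) ∧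
    (∀ p q : K × K, G (cayMul c σ₁ σ₂ σ₃ σ₄ p q) = cayMul c σ₁ σ₂ σ₃ σ₄ (G p) (G q)) := by
  have h3' : ∀ x, σ₃ (g x) = h (σ₃ x) := fun x => by
    have := h3 (σ₃ x)
    rw [AlgEquiv.symm_apply_apply] at this
    rw [this, AlgEquiv.apply_symm_apply]
  have h4' : ∀ x, σ₄ (g x) = h (σ₄ x) := fun x => by
    have := h4 (σ₄ x)
    rw [AlgEquiv.symm_apply_apply] at this
    rw [this, AlgEquiv.apply_symm_apply]
  refine ⟨⟨?_, ?_⟩, ?_, ?_, ?_⟩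
  · rintro ⟨u, v⟩ ⟨x, y⟩ e
    rw [hG, hG, Prod.mk.injEq] at e
    exact Prod.ext (g.injective e.1) (h.injective (mul_right_cancel₀ hb e.2))
  · rintro ⟨x, y⟩
    refine ⟨(g.symm x, h.symm (y * b⁻¹)), ?_⟩
    rw [hG, AlgEquiv.apply_symm_apply, AlgEquiv.apply_symm_apply, inv_mul_cancel_right₀ hb]
  · rintro ⟨u, v⟩ ⟨x, y⟩
    simp only [Prod.mk_add_mk, hG, map_add, add_mul]
  · rintro α ⟨u, v⟩
    simp only [Prod.smul_mk, hG, map_smul, smul_mul_assoc]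
  · rintro ⟨u, v⟩ ⟨x, y⟩
    simp only [cayMul, hG, map_add, map_mul, h1, h2, h3', h4', hbc]
    refine Prod.ext ?_ ?_
    · dsimp only
      ring
    · dsimp only
      ring
end

section
/- Let g, h be F-algebra automorphisms of D such that g ∘ σᵢ = σᵢ ∘ h for i = 1,2 and g ∘ σᵢ⁻¹ = σᵢ⁻¹ ∘ h for i = 3,4, and let b ∈ F with b ≠ 0 satisfy g(c) = b²·c. Then the map G : D × D → D × D defined by G(u,v) = (g(u), h(v)·b) is an F-algebra automorphism of Cay(D,c,σ₁,σ₂,σ₃,σ₄); in particular G is bijective, F-linear, and G((u,v)·(x,y)) = G(u,v)·G(x,y) for all u, v, x, y ∈ D. -/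
/-- If `g, h ∈ Aut_F(D)` satisfy `g∘σᵢ = σᵢ∘h` (i = 1,2),
`g∘σᵢ⁻¹ = σᵢ⁻¹∘h` (i = 3,4), and `b ∈ F⁎` satisfies `g(c) = b²·c`, then
`G(u,v) = (g(u), h(v)·b)` is an `F`-algebra automorphism of `Cay(D,c,σ₁,σ₂,σ₃,σ₄)`. -/
theorem cay_central_division_algebra_automorphism_construction
    {F D : Type*} [Field F] [DivisionRing D] [Algebra F D]
    [FiniteDimensional F D] [Algebra.IsCentral F D]
    (σ₁ σ₂ σ₃ σ₄ : D ≃ₐ[F] D) (c : D) (hc : c ≠ 0)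
    (g h : D ≃ₐ[F] D)
    (h1 : ∀ x : D, g (σ₁ x) = σ₁ (h x))
    (h2 : ∀ x : D, g (σ₂ x) = σ₂ (h x))
    (h3 : ∀ x : D, g (σ₃.symm x) = σ₃.symm (h x))
    (h4 : ∀ x : D, g (σ₄.symm x) = σ₄.symm (h x))
    (b : F) (hb : b ≠ 0) (hbc : g c = algebraMap F D (b ^ 2) * c)
    (G : D × D → D × D) (hG : ∀ u v : D, G (u, v) = (g u, h v * algebraMap F D b)) :
    Function.Bijective G ∧
    (∀ p q : D × D, G (p + q) = G p + G q) ∧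
    (∀ (α : F) (p : D × D), G (α • p) = α • G p) ∧
    (∀ p q : D × D, G (cayMul c σ₁ σ₂ σ₃ σ₄ p q) = cayMul c σ₁ σ₂ σ₃ σ₄ (G p) (G q)) := by
  have hG' : ∀ p : D × D, G p = (g p.1, b • h p.2) := by
    rintro ⟨u, v⟩
    rw [hG, Algebra.smul_def, Algebra.commutes]
  have h3' : ∀ x : D, h (σ₃ x) = σ₃ (g x) := by
    intro x
    have := h3 (σ₃ x)
    rw [AlgEquiv.symm_apply_apply] at this
    rw [this, AlgEquiv.apply_symm_apply]
  have h4' : ∀ x : D, h (σ₄ x) = σ₄ (g x) := by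
    intro x
    have := h4 (σ₄ x)
    rw [AlgEquiv.symm_apply_apply] at this
    rw [this, AlgEquiv.apply_symm_apply]
  rw [← Algebra.smul_def] at hbc
  refine ⟨⟨?_, ?_⟩, ?_, ?_, ?_⟩
  · rintro ⟨u, v⟩ ⟨x, y⟩ hxy
    rw [hG', hG', Prod.mk.injEq] at hxy
    obtain ⟨e1, e2⟩ := hxy
    have e3 := h.injective (smul_right_injective D hb e2)
    exact Prod.ext (g.injective e1) e3
  · rintro ⟨x, y⟩
    refine ⟨(g.symm x, h.symm (b⁻¹ • y)), ?_⟩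
    rw [hG']
    simp only [AlgEquiv.apply_symm_apply, smul_inv_smul₀ hb]
  · intro p q
    simp [hG']
  · intro α p
    simp [hG', smul_comm α b]
  · intro p q
    simp only [hG', cayMul, map_add, map_mul, map_smul, h1, h2, h3', h4', hbc, smul_add,
      smul_mul_assoc, mul_smul_comm, smul_smul, pow_two]
end

section
/- Assume the characteristic of F is not 2, and assume that at least one of the following three sets equals K × {0}: the left nucleus {z : (z·a)·b = z·(a·b) for all a, b}, the middle nucleus {z : (a·z)·b = a·(z·b) for all a, b}, or the right nucleus {z : (a·b)·z = a·(b·z) for all a, b} of A = Cay(K,c,σ₁,σ₂,σ₃,σ₄). Then an F-linear bijection G : K × K → K × K is an F-algebra automorphism of A (i.e., G((u,v)·(x,y)) = G(u,v)·G(x,y) for all u,v,x,y ∈ K) if and only if there exist F-algebra automorphisms g, h of K and b ∈ K with b ≠ 0 such that G(u,v) = (g(u), h(v)·b) for all u, v ∈ K, g ∘ σᵢ = σᵢ ∘ h for i = 1,2, h ∘ σᵢ = σᵢ ∘ g for i = 3,4, and g(c) = c·σ₁(b)·σ₂(b). -/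
/-- If `char F ≠ 2` and one of the left, middle or right nuclei of
`A = Cay(K,c,σ₁,σ₂,σ₃,σ₄)` equals `K × {0}`, then an `F`-linear bijection
`G : K × K → K × K` is an algebra automorphism of `A` iff it has the form
`G(u,v) = (g(u), h(v)·b)` with `g, h ∈ Aut_F(K)`, `g∘σᵢ = σᵢ∘h` (i = 1,2),
`h∘σᵢ = σᵢ∘g` (i = 3,4), `b ≠ 0`, and `g(c) = c·σ₁(b)·σ₂(b)`. -/
theorem cay_field_automorphism_characterization
    {F K : Type*} [Field F] [Field K] [Algebra F K] [FiniteDimensional F K]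
    (hF : (2 : F) ≠ 0)
    (σ₁ σ₂ σ₃ σ₄ : K ≃ₐ[F] K) (c : K) (hc : c ≠ 0)
    (hnuc :
      ({z : K × K | ∀ a b : K × K,
          cayMul c σ₁ σ₂ σ₃ σ₄ (cayMul c σ₁ σ₂ σ₃ σ₄ z a) b
            = cayMul c σ₁ σ₂ σ₃ σ₄ z (cayMul c σ₁ σ₂ σ₃ σ₄ a b)}
        = {z : K × K | z.2 = 0}) ∨
      ({z : K × K | ∀ a b : K × K,
          cayMul c σ₁ σ₂ σ₃ σ₄ (cayMul c σ₁ σ₂ σ₃ σ₄ a z) b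
            = cayMul c σ₁ σ₂ σ₃ σ₄ a (cayMul c σ₁ σ₂ σ₃ σ₄ z b)}
        = {z : K × K | z.2 = 0}) ∨
      ({z : K × K | ∀ a b : K × K,
          cayMul c σ₁ σ₂ σ₃ σ₄ (cayMul c σ₁ σ₂ σ₃ σ₄ a b) z
            = cayMul c σ₁ σ₂ σ₃ σ₄ a (cayMul c σ₁ σ₂ σ₃ σ₄ b z)}
        = {z : K × K | z.2 = 0}))
    (G : K × K → K × K)
    (hGbij : Function.Bijective G)
    (hGadd : ∀ p q : K × K, G (p + q) = G p + G q)
    (hGsmul : ∀ (α : F) (p : K × K), G (α • p) = α • G p) :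
    (∀ p q : K × K,
        G (cayMul c σ₁ σ₂ σ₃ σ₄ p q) = cayMul c σ₁ σ₂ σ₃ σ₄ (G p) (G q)) ↔
      ∃ (g h : K ≃ₐ[F] K) (b : K), b ≠ 0 ∧
        (∀ u v : K, G (u, v) = (g u, h v * b)) ∧
        (∀ x : K, g (σ₁ x) = σ₁ (h x)) ∧
        (∀ x : K, g (σ₂ x) = σ₂ (h x)) ∧
        (∀ x : K, h (σ₃ x) = σ₃ (g x)) ∧
        (∀ x : K, h (σ₄ x) = σ₄ (g x)) ∧
        g c = c * σ₁ b * σ₂ b := by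
  set M := cayMul c σ₁ σ₂ σ₃ σ₄ with hM
  have hMd : ∀ u v x y : K, M (u, v) (x, y)
      = (u * x + c * σ₁ v * σ₂ y, σ₃ u * y + v * σ₄ x) := fun _ _ _ _ => rfl
  clear_value M
  have h2 : (2 : K) ≠ 0 := by
    intro h
    apply hF
    apply (algebraMap F K).injective
    rw [map_zero, map_ofNat]
    exact h
  constructor
  · intro hG
    have key : ∀ z : K × K, z.2 = 0 → (G z).2 = 0 := by
      intro z hz
      rcases hnuc with hn | hn | hn
      all_goals
        rw [Set.ext_iff] at hn
        have h1 := (hn z).2 hz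
        refine (hn (G z)).1 ?_
        intro p q
        obtain ⟨p, rfl⟩ := hGbij.2 p
        obtain ⟨q, rfl⟩ := hGbij.2 q
        have h3 := congrArg G (h1 p q)
        simpa only [hG] using h3
    have hgu : ∀ u : K, G (u, 0) = ((G (u, 0)).1, 0) := fun u =>
      Prod.ext rfl (key (u, 0) rfl)
    have hmul : ∀ x y : K, (G (x * y, 0)).1 = (G (x, 0)).1 * (G (y, 0)).1 := by
      intro x y
      have h1 := hG (x, 0) (y, 0)
      rw [hMd, hgu x, hgu y, hMd] at h1
      simpa using congrArg Prod.fst h1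
    have hG0 : G 0 = 0 := by simpa using hGadd 0 0
    have hone : (G (1, 0)).1 = 1 := by
      have h1 := hmul 1 1
      rw [mul_one] at h1
      have h3 : (G (1, 0)).1 ≠ 0 := by
        intro h4
        have h5 : G (1, 0) = G 0 := by rw [hG0, hgu 1, h4]; rfl
        have h6 := congrArg Prod.fst (hGbij.1 h5)
        simp at h6
      exact mul_left_cancel₀ h3 (by rw [mul_one]; exact h1.symm)
    let gl : K →ₗ[F] K :=
      { toFun := fun u => (G (u, 0)).1
        map_add' := fun x y => by
          have := hGadd (x, 0) (y, 0)
          simpa using congrArg Prod.fst this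
        map_smul' := fun r x => by
          have := hGsmul r (x, 0)
          simpa using congrArg Prod.fst this }
    let ga : K →ₐ[F] K := AlgHom.ofLinearMap gl hone hmul
    let g : K ≃ₐ[F] K := AlgEquiv.ofBijective ga (Algebra.IsAlgebraic.algHom_bijective ga)
    have hg : ∀ u, G (u, 0) = (g u, 0) := hgu
    clear_value g
    obtain ⟨⟨a, b⟩, hab⟩ : ∃ p, G (0, 1) = p := ⟨_, rfl⟩
    have e3 : ∀ w : K, G (0, σ₃ w) = (g w * a, σ₃ (g w) * b) := by
      intro w
      have h1 := hG (w, 0) (0, 1)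
      rw [hg, hab, hMd, hMd] at h1
      simpa using h1
    have e4 : ∀ w : K, G (0, σ₄ w) = (a * g w, b * σ₄ (g w)) := by
      intro w
      have h1 := hG (0, 1) (w, 0)
      rw [hg, hab, hMd, hMd] at h1
      simpa using h1
    have esq : (g c, (0 : K)) = (a * a + c * σ₁ b * σ₂ b, σ₃ a * b + b * σ₄ a) := by
      have h1 := hG (0, 1) (0, 1)
      rw [hab, hMd, hMd, ← hg] at *
      simpa using h1
    have hb : b ≠ 0 := by
      rintro rfl
      have h1 : G (0, 1) = G (g.symm a, 0) := by rw [hab, hg]; simp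
      have h3 := congrArg Prod.snd (hGbij.1 h1)
      simp at h3
    have ha : a = 0 := by
      by_contra ha
      have h34 : ∀ w, σ₃ w = σ₄ w := by
        intro w
        have h1 := e4 (σ₄.symm (σ₃ w))
        rw [AlgEquiv.apply_symm_apply, e3] at h1
        have h3 := congrArg Prod.fst h1
        simp only at h3
        rw [mul_comm] at h3
        have h5 := g.injective (mul_left_cancel₀ ha h3)
        rw [h5, AlgEquiv.apply_symm_apply, ← h5]
      have h1 := congrArg Prod.snd esq
      simp only [h34] at h1
      have h3 : 2 * (b * σ₄ a) = 0 := by linear_combination -h1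
      simp [h2, hb, ha] at h3
    subst ha
    have hgc : g c = c * σ₁ b * σ₂ b := by simpa using congrArg Prod.fst esq
    let h : K ≃ₐ[F] K := (σ₃.symm.trans g).trans σ₃
    have hh : ∀ v, h v = σ₃ (g (σ₃.symm v)) := fun _ => rfl
    clear_value h
    have h0 : ∀ v, G (0, v) = (0, h v * b) := by
      intro v
      have h1 := e3 (σ₃.symm v)
      rw [AlgEquiv.apply_symm_apply] at h1
      rw [h1, hh, mul_zero]
    have s1 : ∀ x : K, σ₁ x ≠ 0 ↔ x ≠ 0 := by simp
    have hb1 : σ₁ b ≠ 0 := by simpa using hb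
    have hb2 : σ₂ b ≠ 0 := by simpa using hb
    have hh1 : h 1 = 1 := map_one h
    refine ⟨g, h, b, hb, ?_, ?_, ?_, ?_, ?_, hgc⟩
    · intro u v
      have h1 := hGadd (u, 0) (0, v)
      rw [hg, h0] at h1
      simpa using h1
    · intro x
      have h1 := hG (0, x) (0, 1)
      rw [h0, h0, hMd, hMd] at h1
      simp only [map_one, map_zero, mul_zero, zero_mul, zero_add, add_zero, mul_one, one_mul,
        hg, map_mul, hgc] at h1
      have h3 := congrArg Prod.fst h1
      simp only at h3
      have h4 : c * σ₁ b * σ₂ b ≠ 0 := by simp [hc, hb]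
      apply mul_left_cancel₀ h4
      linear_combination h3
    · intro x
      have h1 := hG (0, 1) (0, x)
      rw [h0, h0, hMd, hMd] at h1
      simp only [map_one, map_zero, mul_zero, zero_mul, zero_add, add_zero, mul_one, one_mul,
        hg, map_mul, hgc] at h1
      have h3 := congrArg Prod.fst h1
      simp only at h3
      have h4 : c * σ₁ b * σ₂ b ≠ 0 := by simp [hc, hb]
      apply mul_left_cancel₀ h4
      linear_combination h3
    · intro x
      rw [hh, AlgEquiv.symm_apply_apply]
    · intro x
      have h1 := e4 x
      rw [h0] at h1
      have h3 := congrArg Prod.snd h1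
      simp only at h3
      apply mul_left_cancel₀ hb
      linear_combination h3
  · rintro ⟨g, h, b, hb, hGf, g1, g2, g3, g4, hgc⟩ ⟨u, v⟩ ⟨x, y⟩
    rw [hMd, hGf, hGf, hGf, hMd]
    simp only [map_add, map_mul, g1, g2, g3, g4, hgc]
    ext
    · simp only
      ring
    · simp only
      ring
end

section
/- Let G : D × D → D × D be an F-algebra automorphism of Cay(D,c,σ₁,σ₂,σ₃,σ₄) (bijective, F-linear, multiplicative) such that G(x,0) = (g(x),0) for all x ∈ D, where g is an F-algebra automorphism of D. Write G(0,1) = (a,b) with a, b ∈ D. Then b ≠ 0, and for all y ∈ D: a·g(σ₄⁻¹(y)) = g(σ₃⁻¹(y))·a and b·σ₄(g(σ₄⁻¹(y))) = σ₃(g(σ₃⁻¹(y)))·b. -/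
/-- If `G` is an `F`-algebra automorphism of `Cay(D,c,σ₁,σ₂,σ₃,σ₄)`
restricting to `g ∈ Aut_F(D)` on `D`, and `G(0,1) = (a,b)`, then `b ≠ 0` and for
all `y ∈ D`: `a·g(σ₄⁻¹(y)) = g(σ₃⁻¹(y))·a` and `b·σ₄(g(σ₄⁻¹(y))) = σ₃(g(σ₃⁻¹(y)))·b`. -/
theorem cay_central_division_algebra_automorphism_scalars
    {F D : Type*} [Field F] [DivisionRing D] [Algebra F D]
    [FiniteDimensional F D] [Algebra.IsCentral F D]
    (σ₁ σ₂ σ₃ σ₄ : D ≃ₐ[F] D) (c : D) (hc : c ≠ 0)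
    (G : D × D → D × D)
    (hGbij : Function.Bijective G)
    (hGadd : ∀ p q : D × D, G (p + q) = G p + G q)
    (hGsmul : ∀ (α : F) (p : D × D), G (α • p) = α • G p)
    (hGmul : ∀ p q : D × D,
      G (cayMul c σ₁ σ₂ σ₃ σ₄ p q) = cayMul c σ₁ σ₂ σ₃ σ₄ (G p) (G q))
    (g : D ≃ₐ[F] D) (hGg : ∀ x : D, G (x, 0) = (g x, 0))
    (a b : D) (hab : G (0, 1) = (a, b)) :
    b ≠ 0 ∧
    (∀ y : D, a * g (σ₄.symm y) = g (σ₃.symm y) * a) ∧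
    (∀ y : D, b * σ₄ (g (σ₄.symm y)) = σ₃ (g (σ₃.symm y)) * b) := by
  have h4 : ∀ y : D, G (0, y) = (a * g (σ₄.symm y), b * σ₄ (g (σ₄.symm y))) := by
    intro y
    have h := hGmul (0, 1) (σ₄.symm y, 0)
    rw [hab, hGg] at h
    simpa [cayMul] using h
  have h3 : ∀ y : D, G (0, y) = (g (σ₃.symm y) * a, σ₃ (g (σ₃.symm y)) * b) := by
    intro y
    have h := hGmul (σ₃.symm y, 0) (0, 1)
    rw [hab, hGg] at h
    simpa [cayMul] using h
  refine ⟨?_, fun y => ?_, fun y => ?_⟩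
  · rintro rfl
    have h : G (0, 1) = G (g.symm a, 0) := by rw [hab, hGg]; simp
    have h' := congrArg Prod.snd (hGbij.1 h)
    exact one_ne_zero h'
  · exact congrArg Prod.fst ((h4 y).symm.trans (h3 y))
  · exact congrArg Prod.snd ((h4 y).symm.trans (h3 y))
end

section
/- Assume the characteristic of F is not 2 and that σ₃ = σ₄. Let G : D × D → D × D be an F-algebra automorphism of Cay(D,c,σ₁,σ₂,σ₃,σ₄) (bijective, F-linear, multiplicative) such that G(x,0) = (g(x),0) for all x ∈ D, where g is an F-algebra automorphism of D. Then there exists b ∈ F with b ≠ 0 such that g(c) = c·b², and, setting h = σ₃ ∘ g ∘ σ₃⁻¹, one has σ₁ ∘ h = g ∘ σ₁, σ₂ ∘ h = g ∘ σ₂, and G(u,v) = (g(u), h(v)·b) for all u, v ∈ D. -/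
/-- If `char F ≠ 2`, `σ₃ = σ₄`, and `G` is an `F`-algebra automorphism of
`Cay(D,c,σ₁,σ₂,σ₃,σ₄)` restricting to `g ∈ Aut_F(D)` on `D`, then there is `b ∈ F⁎`
with `g(c) = c·b²` and, with `h = σ₃∘g∘σ₃⁻¹`, one has `σ₁∘h = g∘σ₁`, `σ₂∘h = g∘σ₂`
and `G(u,v) = (g(u), h(v)·b)`. -/
theorem cay_central_division_algebra_automorphism_form
    {F D : Type*} [Field F] [DivisionRing D] [Algebra F D]
    [FiniteDimensional F D] [Algebra.IsCentral F D]
    (hF : (2 : F) ≠ 0)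
    (σ₁ σ₂ σ₃ σ₄ : D ≃ₐ[F] D) (c : D) (hc : c ≠ 0) (h34 : σ₃ = σ₄)
    (G : D × D → D × D)
    (hGbij : Function.Bijective G)
    (hGadd : ∀ p q : D × D, G (p + q) = G p + G q)
    (hGsmul : ∀ (α : F) (p : D × D), G (α • p) = α • G p)
    (hGmul : ∀ p q : D × D,
      G (cayMul c σ₁ σ₂ σ₃ σ₄ p q) = cayMul c σ₁ σ₂ σ₃ σ₄ (G p) (G q))
    (g : D ≃ₐ[F] D) (hGg : ∀ x : D, G (x, 0) = (g x, 0)) :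
    ∃ b : F, b ≠ 0 ∧ g c = c * algebraMap F D (b ^ 2) ∧
      (∀ x : D, σ₁ (σ₃ (g (σ₃.symm x))) = g (σ₁ x)) ∧
      (∀ x : D, σ₂ (σ₃ (g (σ₃.symm x))) = g (σ₂ x)) ∧
      (∀ u v : D, G (u, v) = (g u, σ₃ (g (σ₃.symm v)) * algebraMap F D b)) := by
  subst h34
  have hl : ∀ v, G (0, v) = (g (σ₃.symm v) * (G (0, 1)).1,
      σ₃ (g (σ₃.symm v)) * (G (0, 1)).2) := by
    intro v
    have h := hGmul (σ₃.symm v, 0) (0, 1)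
    simpa [cayMul, hGg] using h
  have hr : ∀ v, G (0, v) = ((G (0, 1)).1 * g (σ₃.symm v),
      (G (0, 1)).2 * σ₃ (g (σ₃.symm v))) := by
    intro v
    have h := hGmul (0, 1) (σ₃.symm v, 0)
    simpa [cayMul, hGg] using h
  have h11 := hGmul (0, 1) (0, 1)
  have hv1 : ∀ v, G (cayMul c σ₁ σ₂ σ₃ σ₃ (0, v) (0, 1)) = _ := fun v => hGmul (0, v) (0, 1)
  have h1v : ∀ v, G (cayMul c σ₁ σ₂ σ₃ σ₃ (0, 1) (0, v)) = _ := fun v => hGmul (0, 1) (0, v)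
  have hsplit : ∀ u v, G (u, v) = (g u, 0) + G (0, v) := by
    intro u v
    rw [← hGg, ← hGadd]
    simp
  obtain ⟨a, b, hab⟩ : ∃ a b, G (0, 1) = (a, b) := ⟨_, _, rfl⟩
  simp only [hab] at hl hr h11
  have ha : a ∈ Subalgebra.center F D := by
    rw [Subalgebra.mem_center_iff]
    intro x
    have h := (hl (σ₃ (g.symm x))).symm.trans (hr (σ₃ (g.symm x)))
    simpa using congrArg Prod.fst h
  have hb : b ∈ Subalgebra.center F D := by
    rw [Subalgebra.mem_center_iff]
    intro x
    have h := (hl (σ₃ (g.symm (σ₃.symm x)))).symm.trans (hr (σ₃ (g.symm (σ₃.symm x))))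
    simpa using congrArg Prod.snd h
  rw [Algebra.IsCentral.center_eq_bot, Algebra.mem_bot] at ha hb
  obtain ⟨α, rfl⟩ := ha
  obtain ⟨β, rfl⟩ := hb
  have hβ : β ≠ 0 := by
    rintro rfl
    have h : G (0, 1) = G (algebraMap F D α, 0) := by
      rw [hab, hGg]; simp
    simpa using congrArg Prod.snd (hGbij.1 h)
  simp only [cayMul, hGg, map_zero, map_one, mul_zero, mul_one, zero_mul, zero_add, add_zero,
    AlgEquiv.commutes, Prod.mk.injEq] at h11
  obtain ⟨h1, h2⟩ := h11
  have hα : α = 0 := by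
    rw [← map_mul, ← map_mul, ← map_add] at h2
    have h3 : (0 : F) = α * β + β * α :=
      (algebraMap F D).injective (by rw [map_zero]; exact h2)
    have h4 : 2 * β * α = 0 := by linear_combination -h3
    simpa [hF, hβ] using h4
  subst hα
  have hgc : g c = c * algebraMap F D (β ^ 2) := by
    rw [h1]; simp [pow_two, mul_assoc]
  have hne : algebraMap F D (β ^ 2) ≠ 0 := by simpa using hβ
  have key : ∀ x y : D, g c * x = c * y * algebraMap F D (β ^ 2) → y = x := by
    intro x y h
    rw [hgc, mul_assoc, mul_assoc, ← Algebra.commutes (β ^ 2) y] at h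
    exact (mul_left_cancel₀ hne (mul_left_cancel₀ hc h)).symm
  refine ⟨β, hβ, hgc, fun x => key _ _ ?_, fun x => key _ _ ?_, fun u v => ?_⟩
  · have h := congrArg Prod.fst (hv1 x)
    rw [hab, hl x] at h
    simp only [cayMul, hGg, map_zero, map_one, mul_zero, mul_one, zero_mul, zero_add, add_zero,
      AlgEquiv.commutes, map_mul] at h
    rw [h]; simp [pow_two, mul_assoc]
  · have h := congrArg Prod.fst (h1v x)
    rw [hab, hl x] at h
    simp only [cayMul, hGg, map_zero, map_one, mul_zero, mul_one, zero_mul, zero_add, add_zero,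
      AlgEquiv.commutes, map_mul] at h
    rw [h, mul_assoc c, ← mul_assoc (algebraMap F D β), Algebra.commutes β]
    simp [pow_two, mul_assoc]
  · rw [hsplit, hl]; simp
end
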